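/- arXiv:1512.00107 — 2 statements merged into one kernel-verified Lean document; each statement's English description precedes it below -/
import Mathlib

section
/- If an admissible word ω = ω₁ω₂⋯ω_k contains a letter from S = {T₂, L₂, L₃} at some position i, then there exist positions j and m with m < j < i such that ω_j = L₁ and ω_m = V. In other words, every occurrence of T₂, L₂, or L₃ in an admissible word is strictly preceded by an occurrence of L₁, which in turn is strictly preceded by an occurrence of V. -/
/-!
Each critical letter other than `V` can only follow a critical letter, so, going backwards from such a
letter, the start `R` of the word cannot be reached without meeting a `V`: this is
`exists_V_before`. A letter of S = {T₂, L₂, L₃} can only follow `L₁` or another letter of S, so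
going backwards from it one must meet an `L₁`; applying `exists_V_before` to that `L₁` gives the
`V` before it.
-/

/-- The seven-letter alphabet for RVT codes in the Monster tower over ℝ³. -/
inductive Letter : Type
  | R | V | T1 | T2 | L1 | L2 | L3
  deriving DecidableEq, Repr

open Letter

/-- The succession rules: which letter may immediately follow which. -/
def CanFollow : Letter → Letter → Prop
  | .R,  b => b = R ∨ b = V
  | .V,  b => b = R ∨ b = V ∨ b = T1 ∨ b = L1
  | .T1, b => b = R ∨ b = V ∨ b = T1 ∨ b = L1
  | .T2, b => b = R ∨ b = V ∨ b = T2 ∨ b = L3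
  | .L1, _ => True
  | .L2, _ => True
  | .L3, _ => True

/-- A word is admissible if it is nonempty, begins with `R`, and each
consecutive pair of letters obeys the succession rules. -/
def Admissible (ω : List Letter) : Prop :=
  ω ≠ [] ∧ ω.head? = some R ∧ ω.Chain' CanFollow
/-- A letter other than `R` and `V` is never first and never follows `R`, so a `V` precedes it. -/
lemma exists_V_before (ω : List Letter) (hω : Admissible ω) (i : ℕ) (h : i < ω.length)
    (hR : ω[i] ≠ R) (hV : ω[i] ≠ V) : ∃ m, ∃ hm : m < i, ω[m] = V := by
  obtain ⟨-, hhead, hchain⟩ := hω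
  induction i with
  | zero =>
    rw [List.head?_eq_getElem?, List.getElem?_eq_getElem h] at hhead
    exact absurd (Option.some.inj hhead) hR
  | succ n ih =>
    have hc : CanFollow ω[n] ω[n + 1] := List.isChain_iff_getElem.mp hchain n h
    by_cases hnV : ω[n] = V
    · exact ⟨n, n.lt_succ_self, hnV⟩
    · have hnR : ω[n] ≠ R := by
        intro hn
        rw [hn] at hc
        exact hc.elim hR hV
      obtain ⟨m, hm, hmV⟩ := ih (by omega) hnR hnV
      exact ⟨m, by omega, hmV⟩

/-- A letter of S can only follow `L₁` or a letter of S. -/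
lemma CanFollow.eq_L1_or_mem {a b : Letter} (hab : CanFollow a b) (hb : b ∈ [T2, L2, L3]) :
    a = L1 ∨ a ∈ [T2, L2, L3] := by
  cases a <;> cases b <;> simp_all [CanFollow]

/-- Every occurrence of a letter from S = {T₂, L₂, L₃} in an
admissible word is strictly preceded by an occurrence of L₁, which in turn
is strictly preceded by an occurrence of V. -/
theorem stmt9 (ω : List Letter) (hω : Admissible ω)
    (i : ℕ) (h : i < ω.length) (hS : ω.get ⟨i, h⟩ ∈ [T2, L2, L3]) :
    ∃ j m, ∃ (hm : m < j) (hj : j < i),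
      ω.get ⟨j, by omega⟩ = L1 ∧ ω.get ⟨m, by omega⟩ = V := by
  simp only [List.get_eq_getElem] at hS ⊢
  induction i with
  | zero =>
    have hhead := hω.2.1
    rw [List.head?_eq_getElem?, List.getElem?_eq_getElem h] at hhead
    rw [Option.some.inj hhead] at hS
    simp at hS
  | succ n ih =>
    have hc : CanFollow ω[n] ω[n + 1] := List.isChain_iff_getElem.mp hω.2.2 n h
    rcases hc.eq_L1_or_mem hS with hL | hn
    · obtain ⟨m, hm, hmV⟩ := exists_V_before ω hω n (by omega) (by simp [hL]) (by simp [hL])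
      exact ⟨n, m, hm, n.lt_succ_self, hL, hmV⟩
    · obtain ⟨j, m, hm, hj, hjL, hmV⟩ := ih (by omega) hn
      exact ⟨j, m, hm, by omega, hjL, hmV⟩
end

section
/- Let ω = ω₁ω₂⋯ω_k be an admissible word whose last letter is T₂ and which contains no other letter from S = {T₂, L₂, L₃} (i.e., ω_k = T₂ and ω_i ∉ S for all i < k). Then k ≥ 4, the next-to-last letter satisfies ω_{k−1} = L₁, and there exists an integer m ≥ 0 with k ≥ m + 4 such that ω_{k−1−j} = T₁ for all 1 ≤ j ≤ m and ω_{k−2−m} ∈ {V, L₁}. That is, ω ends in one of the three forms λ V T₁^m L₁ T₂ (m ≥ 0), λ L₁ T₁^m L₁ T₂ (m ≥ 1), or λ L₁ L₁ T₂. -/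
open Letter

/-- Reading leftwards from an occurrence of `T1` or `L1` at position `i`, one meets a block of `m`
letters `T1` stopped by `V` or `L1`, strictly to the right of position `0`. The word is encoded as
a function on `ℕ` of which only the values up to `n` matter. -/
theorem exists_block (f : ℕ → Letter) (n : ℕ) (h0 : f 0 = R)
    (hc : ∀ i < n, CanFollow (f i) (f (i + 1)))
    (hS : ∀ i < n, f i ∉ [T2, L2, L3]) :
    ∀ i ≤ n, f i = T1 ∨ f i = L1 →
      ∃ m, m + 2 ≤ i ∧ (∀ j, 1 ≤ j → j ≤ m → f (i - j) = T1) ∧ f (i - 1 - m) ∈ [V, L1] := by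
  intro i
  induction i with
  | zero => intro _ h; simp [h0] at h
  | succ i ih =>
    intro hi h
    have hci := hc i (by omega)
    have hSi := hS i (by omega)
    have hprev : f i ∈ [V, L1] ∨ f i = T1 := by
      rcases h with h | h <;> rw [h] at hci <;> cases hf : f i <;> simp_all [CanFollow]
    rcases hprev with hf | hf
    · refine ⟨0, ?_, fun j h1 h2 => by omega, by simpa using hf⟩
      rcases i with _ | i
      · simp [h0] at hf
      · omega
    · obtain ⟨m, hm, hT, hV⟩ := ih (by omega) (Or.inl hf)
      refine ⟨m + 1, by omega, fun j h1 h2 => ?_, ?_⟩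
      · rcases Nat.eq_or_lt_of_le h1 with rfl | h1
        · simpa using hf
        · have := hT (j - 1) (by omega) (by omega)
          rwa [show i + 1 - j = i - (j - 1) by omega]
      · rwa [show i + 1 - 1 - (m + 1) = i - 1 - m by omega]

/-- An admissible word whose last letter is T₂ and which
contains no other letter from S = {T₂, L₂, L₃} has length k ≥ 4,
next-to-last letter L₁, and ends in one of the forms λVT₁^mL₁T₂ (m ≥ 0),
λL₁T₁^mL₁T₂ (m ≥ 1), or λL₁L₁T₂. -/
theorem stmt12 (ω : List Letter) (hω : Admissible ω) (hne : ω ≠ [])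
    (hlast : ω.getLast hne = T2)
    (hS : ∀ i (hi : i < ω.length - 1), ω.get ⟨i, by omega⟩ ∉ [T2, L2, L3]) :
    ∃ (h4 : 4 ≤ ω.length),
      ω.get ⟨ω.length - 2, by omega⟩ = L1 ∧
      ∃ m, ∃ (hm : m + 4 ≤ ω.length),
        (∀ j, 1 ≤ j → j ≤ m → ω.get ⟨ω.length - 2 - j, by omega⟩ = T1) ∧
        ω.get ⟨ω.length - 3 - m, by omega⟩ ∈ [V, L1] := by
  obtain ⟨-, hhead, hchain⟩ := hω
  have hpos : 0 < ω.length := List.length_pos_iff.mpr hne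
  have hch := List.isChain_iff_getElem.mp hchain
  have hget : ∀ i (hi : i < ω.length), ω.getD i R = ω.get ⟨i, hi⟩ := fun i hi => by
    simp [List.getD, hi]
  have hlast' : ω.get ⟨ω.length - 1, by omega⟩ = T2 := by
    rw [← hlast, List.getLast_eq_getElem]; rfl
  have h0 : ω.get ⟨0, hpos⟩ = R := by
    cases ω with
    | nil => simp at hpos
    | cons a l => simpa using hhead
  have h2 : 2 ≤ ω.length := by
    by_contra hlt
    have h1 : ω.length - 1 = 0 := by omega
    simp only [h1, h0] at hlast'
    cases hlast'
  have hL1 : ω.get ⟨ω.length - 2, by omega⟩ = L1 := by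
    have hc := hch (ω.length - 2) (by omega)
    have hs := hS (ω.length - 2) (by omega)
    simp only [List.get_eq_getElem, show ω.length - 2 + 1 = ω.length - 1 by omega] at hc hs hlast' ⊢
    rw [hlast'] at hc
    cases hf : ω[ω.length - 2] <;> simp_all [CanFollow]
  obtain ⟨m, hm, hT, hV⟩ := exists_block (fun i => ω.getD i R) (ω.length - 2)
    (by rw [hget 0 hpos, h0])
    (fun i hi => by
      simp only [hget i (by omega), hget (i + 1) (by omega)]
      exact hch i (by omega))
    (fun i hi => by
      simp only [hget i (by omega)]
      exact hS i (by omega))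
    (ω.length - 2) le_rfl (Or.inr (by simp only [hget _ (show ω.length - 2 < _ by omega), hL1]))
  refine ⟨by omega, hL1, m, by omega, fun j hj1 hj2 => ?_, ?_⟩
  · rw [← hget]
    exact hT j hj1 hj2
  · rw [← hget, show ω.length - 3 - m = ω.length - 2 - 1 - m by omega]
    exact hV
end
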